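/- For every constant ε ∈ (0,1) there is a constant C > 0 such that the following holds. Let α ∈ (n^{-1/10}, 1), let k = ⌈C/(αε²)⌉, and let E' be the multiset union of k independent random edge sets E'_1,...,E'_k on vertex set [n], where each E'_i includes each of the C(n,2) potential edges independently with probability α/(2n); let m denote the total number of edges of E' counted with multiplicity. Then with probability 1 − o(1) as n → ∞, every bipartition (S, [n]∖S) of [n] is crossed by at most (1+ε)·m/2 edges of E' (counted with multiplicity). -/

import Mathlib

open Finset

/-- The set of potential edges of a graph on vertex set `Fin n`: all non-diagonal
unordered pairs. -/
noncomputable def potentialEdges (n : ℕ) : Finset (Sym2 (Fin n)) :=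
  univ.filter (fun e => ¬ e.IsDiag)

/-- The probability that a random edge set (each potential edge included independently
with probability `p`) equals exactly `S`. -/
noncomputable def erWeight (n : ℕ) (p : ℝ) (S : Finset (Sym2 (Fin n))) : ℝ :=
  p ^ S.card * (1 - p) ^ ((potentialEdges n).card - S.card)

/-- The edge `e` crosses the bipartition `(S, [n] ∖ S)`: one endpoint of `e` lies in `S`
and the other does not. -/
def crosses {n : ℕ} (S : Finset (Fin n)) (e : Sym2 (Fin n)) : Prop :=
  ∃ u v : Fin n, e = s(u, v) ∧ u ∈ S ∧ v ∉ S

/-!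
For a fixed bipartition `S`, give a crossing edge the weight `1 - ε` and every other edge the weight
`-(1 + ε)`; then `S` is crossed by more than `(1 + ε) m / 2` edges exactly when the total weight of
`E'` is positive. Since `S` cuts at most `n² / 4` of the `n (n - 1) / 2` pairs, the mean weight of a
pair is about `-ε`, so tilting by `ε / 8` makes the exponential moment of the total weight at most
`exp (-Ω(k p n² ε²))`. Once `k p n ε²` is a large constant this is at most `exp (2 - 2 n)`, which
survives the union bound over the `2 ^ n` bipartitions.
-/

section RandomEdgeSets

variable {n k : ℕ} {p : ℝ}

/-- The expectation of `X (E₁, …, E_k)` for `k` independent random edge sets on `Fin n`, each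
including every potential edge independently with probability `p`. It is a finite weighted sum, and
so an expectation in the usual sense only for `0 ≤ p ≤ 1`. -/
noncomputable def erExpectation (p : ℝ) (X : (Fin k → Finset (Sym2 (Fin n))) → ℝ) : ℝ :=
  ∑ f ∈ Fintype.piFinset (fun _ : Fin k => (potentialEdges n).powerset),
    (∏ i, erWeight n p (f i)) * X f

/-- The probability of the event `P` for `k` independent random edge sets on `Fin n`, each including
every potential edge independently with probability `p`. -/
noncomputable def erProb (p : ℝ) (P : (Fin k → Finset (Sym2 (Fin n))) → Prop) [DecidablePred P] :
    ℝ :=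
  ∑ f ∈ Fintype.piFinset (fun _ : Fin k => (potentialEdges n).powerset),
    if P f then ∏ i, erWeight n p (f i) else 0

lemma erWeight_nonneg (hp : p ∈ Set.Icc 0 1) (s : Finset (Sym2 (Fin n))) : 0 ≤ erWeight n p s :=
  mul_nonneg (pow_nonneg hp.1 _) (pow_nonneg (sub_nonneg.2 hp.2) _)

lemma sum_erWeight_mul_prod (p : ℝ) (g : Sym2 (Fin n) → ℝ) :
    ∑ s ∈ (potentialEdges n).powerset, erWeight n p s * ∏ e ∈ s, g e =
      ∏ e ∈ potentialEdges n, (p * g e + (1 - p)) := by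
  classical
  rw [prod_add]
  refine sum_congr rfl fun s hs => ?_
  rw [prod_mul_distrib, prod_const, prod_const, card_sdiff_of_subset (mem_powerset.1 hs), erWeight]
  ring

lemma erExpectation_prod_prod (p : ℝ) (g : Sym2 (Fin n) → ℝ) :
    erExpectation p (fun f : Fin k → _ => ∏ i, ∏ e ∈ f i, g e) =
      (∏ e ∈ potentialEdges n, (p * g e + (1 - p))) ^ k := by
  calc erExpectation p (fun f : Fin k → _ => ∏ i, ∏ e ∈ f i, g e)
      = ∏ _i : Fin k, ∑ s ∈ (potentialEdges n).powerset, erWeight n p s * ∏ e ∈ s, g e := by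
        simp only [erExpectation, prod_univ_sum, prod_mul_distrib]
    _ = (∏ e ∈ potentialEdges n, (p * g e + (1 - p))) ^ k := by
        rw [sum_erWeight_mul_prod, prod_const, card_univ, Fintype.card_fin]

lemma erExpectation_one (p : ℝ) :
    erExpectation p (fun _ : Fin k → Finset (Sym2 (Fin n)) => 1) = 1 := by
  simpa using erExpectation_prod_prod (n := n) (k := k) p (fun _ => 1)

lemma erExpectation_sum {ι : Type*} (s : Finset ι) (p : ℝ)
    (X : ι → (Fin k → Finset (Sym2 (Fin n))) → ℝ) :
    erExpectation p (fun f => ∑ j ∈ s, X j f) = ∑ j ∈ s, erExpectation p (X j) := by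
  simp only [erExpectation, mul_sum]
  exact sum_comm

variable {P : (Fin k → Finset (Sym2 (Fin n))) → Prop} [DecidablePred P]

lemma erProb_le_one (hp : p ∈ Set.Icc 0 1) : erProb p P ≤ 1 := by
  rw [← erExpectation_one (n := n) (k := k) p, erProb, erExpectation]
  refine sum_le_sum fun f _ => ?_
  rw [mul_one]
  split_ifs
  · exact le_rfl
  · exact prod_nonneg fun i _ => erWeight_nonneg hp (f i)

lemma one_sub_erExpectation_le_erProb (hp : p ∈ Set.Icc 0 1)
    {X : (Fin k → Finset (Sym2 (Fin n))) → ℝ} (hX : ∀ f, 0 ≤ X f) (hPX : ∀ f, ¬ P f → 1 ≤ X f) :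
    1 - erExpectation p X ≤ erProb p P := by
  rw [← erExpectation_one (n := n) (k := k) p, erProb, erExpectation, erExpectation,
    ← sum_sub_distrib]
  refine sum_le_sum fun f _ => ?_
  have weight_nonneg : 0 ≤ ∏ i, erWeight n p (f i) :=
    prod_nonneg fun i _ => erWeight_nonneg hp (f i)
  rw [← mul_sub]
  split_ifs with hf
  · exact mul_le_of_le_one_right weight_nonneg (by linarith [hX f])
  · exact mul_nonpos_of_nonneg_of_nonpos weight_nonneg (by linarith [hPX f hf])

lemma prod_mul_exp_add_le_exp {ι : Type*} (s : Finset ι) (hp : p ∈ Set.Icc 0 1) (w : ι → ℝ) :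
    ∏ e ∈ s, (p * Real.exp (w e) + (1 - p)) ≤ Real.exp (p * ∑ e ∈ s, (Real.exp (w e) - 1)) := by
  rw [mul_sum, Real.exp_sum]
  refine prod_le_prod (fun e _ => ?_) fun e _ => ?_
  · exact add_nonneg (mul_nonneg hp.1 (Real.exp_nonneg _)) (sub_nonneg.2 hp.2)
  · linarith [Real.add_one_le_exp (p * (Real.exp (w e) - 1))]

lemma erExpectation_exp_sum_sum_le (hp : p ∈ Set.Icc 0 1) (w : Sym2 (Fin n) → ℝ) :
    erExpectation p (fun f : Fin k → _ => Real.exp (∑ i, ∑ e ∈ f i, w e)) ≤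
      Real.exp (k * (p * ∑ e ∈ potentialEdges n, (Real.exp (w e) - 1))) := by
  simp only [Real.exp_sum]
  rw [erExpectation_prod_prod, Real.exp_nat_mul]
  refine pow_le_pow_left₀ (prod_nonneg fun e _ => ?_) (prod_mul_exp_add_le_exp _ hp w) k
  exact add_nonneg (mul_nonneg hp.1 (Real.exp_nonneg _)) (sub_nonneg.2 hp.2)

end RandomEdgeSets

section Cuts

variable {n k : ℕ} {ε p : ℝ}

lemma card_potentialEdges (n : ℕ) : (potentialEdges n).card = n.choose 2 := by
  rw [potentialEdges, ← Fintype.card_subtype, Sym2.card_subtype_not_diag, Fintype.card_fin]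

open Classical in
lemma four_mul_card_filter_crosses_le (S : Finset (Fin n)) (s : Finset (Sym2 (Fin n))) :
    4 * (s.filter (crosses S)).card ≤ n ^ 2 := by
  have subset_image : s.filter (crosses S) ⊆ (S ×ˢ Sᶜ).image (fun x => s(x.1, x.2)) := by
    intro e he
    obtain ⟨u, v, rfl, hu, hv⟩ := (mem_filter.1 he).2
    exact mem_image.2 ⟨(u, v), by simp [hu, hv], rfl⟩
  calc 4 * (s.filter (crosses S)).card
      ≤ 4 * (S.card * Sᶜ.card) := by
        gcongr
        exact ((card_le_card subset_image).trans card_image_le).trans_eq (card_product _ _)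
    _ ≤ (S.card + Sᶜ.card) ^ 2 := by
        rw [← mul_assoc]
        exact four_mul_le_sq_add _ _
    _ = n ^ 2 := by rw [card_add_card_compl, Fintype.card_fin]

open Classical in
/-- Every bipartition is crossed by at most a fraction `(1 + ε) / 2` of the edges of the multiset
union of the `f i`. -/
def HasOnlySmallCuts (ε : ℝ) (f : Fin k → Finset (Sym2 (Fin n))) : Prop :=
  ∀ S : Finset (Fin n),
    ((∑ i, ((f i).filter (crosses S)).card : ℕ) : ℝ) ≤
      (1 + ε) * ((∑ i, (f i).card : ℕ) : ℝ) / 2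

noncomputable instance (ε : ℝ) : DecidablePred (HasOnlySmallCuts (n := n) (k := k) ε) :=
  fun _ => Fintype.decidableForallFintype

open Classical in
/-- The contribution of the edge `e` to twice the number of edges crossing `S` minus `1 + ε` times
the number of all edges. -/
noncomputable def cutExcess (ε : ℝ) (S : Finset (Fin n)) (e : Sym2 (Fin n)) : ℝ :=
  if crosses S e then 1 - ε else -(1 + ε)

open Classical in
lemma sum_cutExcess (ε : ℝ) (S : Finset (Fin n)) (s : Finset (Sym2 (Fin n))) :
    ∑ e ∈ s, cutExcess ε S e = 2 * ((s.filter (crosses S)).card : ℝ) - (1 + ε) * s.card := by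
  have cutExcess_eq (e : Sym2 (Fin n)) :
      cutExcess ε S e = 2 * (if crosses S e then 1 else 0) - (1 + ε) := by
    unfold cutExcess
    split_ifs <;> ring
  simp only [cutExcess_eq, sum_sub_distrib, ← mul_sum, sum_boole, sum_const, nsmul_eq_mul]
  ring

lemma abs_cutExcess_le_two (hε : |ε| ≤ 1) (S : Finset (Fin n)) (e : Sym2 (Fin n)) :
    |cutExcess ε S e| ≤ 2 := by
  rw [abs_le] at hε ⊢
  unfold cutExcess
  split_ifs <;> constructor <;> linarith [hε.1, hε.2]

lemma exists_sum_cutExcess_pos_of_not_hasOnlySmallCuts {f : Fin k → Finset (Sym2 (Fin n))}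
    (hf : ¬ HasOnlySmallCuts ε f) : ∃ S, 0 < ∑ i, ∑ e ∈ f i, cutExcess ε S e := by
  simp only [HasOnlySmallCuts, not_forall, not_le] at hf
  obtain ⟨S, hS⟩ := hf
  refine ⟨S, ?_⟩
  push_cast at hS
  simp only [sum_cutExcess, sum_sub_distrib, ← mul_sum]
  linarith

lemma sum_potentialEdges_cutExcess_le (ε : ℝ) (S : Finset (Fin n)) :
    ∑ e ∈ potentialEdges n, cutExcess ε S e ≤ n / 2 - ε * (n * (n - 1) / 2) := by
  classical
  have card_cut : 4 * (((potentialEdges n).filter (crosses S)).card : ℝ) ≤ n ^ 2 :=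
    mod_cast four_mul_card_filter_crosses_le S (potentialEdges n)
  rw [sum_cutExcess, card_potentialEdges, Nat.cast_choose_two]
  linarith

lemma sum_exp_sub_one_le {ι : Type*} (s : Finset ι) (w : ι → ℝ) {δ : ℝ} (hδ : δ ≤ 1)
    (hw : ∀ e ∈ s, |w e| ≤ δ) :
    ∑ e ∈ s, (Real.exp (w e) - 1) ≤ ∑ e ∈ s, w e + s.card * δ ^ 2 := by
  rw [← nsmul_eq_mul, ← sum_const, ← sum_add_distrib]
  refine sum_le_sum fun e he => ?_
  have exp_le := (abs_le.1 (Real.abs_exp_sub_one_sub_id_le ((hw e he).trans hδ))).2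
  have sq_le : w e ^ 2 ≤ δ ^ 2 := sq_le_sq.2 ((hw e he).trans (le_abs_self δ))
  linarith

lemma sum_exp_cutExcess_sub_one_le (hε : ε ∈ Set.Ioc 0 1) (hn : 4 ≤ ε * (n - 1))
    (S : Finset (Fin n)) :
    ∑ e ∈ potentialEdges n, (Real.exp (ε / 8 * cutExcess ε S e) - 1) ≤
      -(ε ^ 2 * n * (n - 1) / 64) := by
  obtain ⟨hε0, hε1⟩ := hε
  have abs_le (e : Sym2 (Fin n)) : |ε / 8 * cutExcess ε S e| ≤ ε / 4 := by
    rw [abs_mul, abs_of_pos (by positivity)]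
    linarith [mul_le_mul_of_nonneg_left
      (abs_cutExcess_le_two (abs_le.2 ⟨by linarith, hε1⟩) S e) (by positivity : 0 ≤ ε / 8)]
  calc ∑ e ∈ potentialEdges n, (Real.exp (ε / 8 * cutExcess ε S e) - 1)
      ≤ ∑ e ∈ potentialEdges n, ε / 8 * cutExcess ε S e + (potentialEdges n).card * (ε / 4) ^ 2 :=
        sum_exp_sub_one_le _ _ (by linarith) fun e _ => abs_le e
    _ ≤ ε / 8 * (n / 2 - ε * (n * (n - 1) / 2)) + n * (n - 1) / 2 * (ε / 4) ^ 2 := by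
        rw [← mul_sum, card_potentialEdges, Nat.cast_choose_two]
        gcongr
        exact sum_potentialEdges_cutExcess_le ε S
    _ = ε * n / 64 * (4 - ε * (n - 1)) - ε ^ 2 * n * (n - 1) / 64 := by ring
    _ ≤ -(ε ^ 2 * n * (n - 1) / 64) := by
        have := mul_nonpos_of_nonneg_of_nonpos (by positivity : 0 ≤ ε * n / 64) (sub_nonpos.2 hn)
        linarith

lemma erExpectation_exp_cutExcess_le (hε : ε ∈ Set.Ioc 0 1) (hn : 4 ≤ ε * (n - 1))
    (hp : p ∈ Set.Icc 0 1) (hk : 128 ≤ k * p * n * ε ^ 2) (S : Finset (Fin n)) :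
    erExpectation p (fun f : Fin k → _ => Real.exp (∑ i, ∑ e ∈ f i, ε / 8 * cutExcess ε S e)) ≤
      Real.exp (2 - 2 * n) := by
  refine (erExpectation_exp_sum_sum_le hp _).trans (Real.exp_le_exp.2 ?_)
  have hn1 : (0 : ℝ) ≤ n - 1 := (pos_of_mul_pos_right (by linarith) hε.1.le).le
  have hp0 := hp.1
  calc k * (p * ∑ e ∈ potentialEdges n, (Real.exp (ε / 8 * cutExcess ε S e) - 1))
      ≤ k * (p * -(ε ^ 2 * n * (n - 1) / 64)) := by
        gcongr
        exact sum_exp_cutExcess_sub_one_le hε hn S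
    _ = -(k * p * n * ε ^ 2 * (n - 1) / 64) := by ring
    _ ≤ -(128 * (n - 1) / 64) := by gcongr
    _ = 2 - 2 * n := by ring

lemma two_pow_mul_exp_le (n : ℕ) : 2 ^ n * Real.exp (2 - 2 * n) ≤ Real.exp (2 - n) := by
  calc 2 ^ n * Real.exp (2 - 2 * n)
      ≤ Real.exp 1 ^ n * Real.exp (2 - 2 * n) := by
        gcongr
        linarith [Real.add_one_le_exp (1 : ℝ)]
    _ = Real.exp (2 - n) := by
        rw [Real.exp_one_pow, ← Real.exp_add]
        ring_nf

theorem one_sub_exp_le_erProb_hasOnlySmallCuts (hε : ε ∈ Set.Ioc 0 1) (hn : 4 ≤ ε * (n - 1))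
    (hp : p ∈ Set.Icc 0 1) (hk : 128 ≤ k * p * n * ε ^ 2) :
    1 - Real.exp (2 - n) ≤ erProb p (HasOnlySmallCuts (n := n) (k := k) ε) := by
  let tilt (S : Finset (Fin n)) (f : Fin k → Finset (Sym2 (Fin n))) : ℝ :=
    Real.exp (∑ i, ∑ e ∈ f i, ε / 8 * cutExcess ε S e)
  have expectation_le : erExpectation p (fun f => ∑ S, tilt S f) ≤ Real.exp (2 - n) :=
    calc erExpectation p (fun f => ∑ S, tilt S f)
        = ∑ S, erExpectation p (tilt S) := erExpectation_sum _ _ _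
      _ ≤ ∑ _S : Finset (Fin n), Real.exp (2 - 2 * n) :=
          sum_le_sum fun S _ => erExpectation_exp_cutExcess_le hε hn hp hk S
      _ = 2 ^ n * Real.exp (2 - 2 * n) := by simp
      _ ≤ Real.exp (2 - n) := two_pow_mul_exp_le n
  have tilt_nonneg (S f) : 0 ≤ tilt S f := Real.exp_nonneg _
  have one_le_sum_tilt (f) (hf : ¬ HasOnlySmallCuts ε f) : 1 ≤ ∑ S, tilt S f := by
    obtain ⟨S, hS⟩ := exists_sum_cutExcess_pos_of_not_hasOnlySmallCuts hf
    have one_le_tilt : 1 ≤ tilt S f := by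
      simp only [tilt, ← mul_sum]
      exact Real.one_le_exp (mul_nonneg (by linarith [hε.1]) hS.le)
    exact one_le_tilt.trans (single_le_sum (fun T _ => tilt_nonneg T f) (mem_univ S))
  linarith [one_sub_erExpectation_le_erProb hp
    (fun f => sum_nonneg fun S _ => tilt_nonneg S f) one_le_sum_tilt]

end Cuts

theorem stmt3_general {ε : ℝ} (hε : ε ∈ Set.Ioc 0 1) {α : ℕ → ℝ} {k : ℕ → ℕ}
    (hα : ∀ᶠ n : ℕ in Filter.atTop, α n ∈ Set.Ioc 0 (2 * n : ℝ))
    (hk : ∀ᶠ n in Filter.atTop, 256 / (α n * ε ^ 2) ≤ k n) :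
    Filter.Tendsto
      (fun n : ℕ => erProb (α n / (2 * n)) (HasOnlySmallCuts (n := n) (k := k n) ε))
      Filter.atTop (nhds 1) := by
  have hε0 : 0 < ε := hε.1
  have lower_tendsto :
      Filter.Tendsto (fun n : ℕ => 1 - Real.exp (2 - n)) Filter.atTop (nhds 1) := by
    have exponent_tendsto : Filter.Tendsto (fun n : ℕ => (2 - n : ℝ)) Filter.atTop Filter.atBot :=
      Filter.tendsto_atBot_add_const_left _ 2
        (Filter.tendsto_neg_atTop_atBot.comp tendsto_natCast_atTop_atTop)
    simpa using (Real.tendsto_exp_atBot.comp exponent_tendsto).const_sub 1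
  have prob_mem : ∀ᶠ n : ℕ in Filter.atTop, α n / (2 * n) ∈ Set.Icc 0 1 := by
    filter_upwards [hα] with n ⟨hα0, hα1⟩
    exact ⟨by positivity, div_le_one_of_le₀ hα1 (by positivity)⟩
  refine tendsto_of_tendsto_of_tendsto_of_le_of_le' lower_tendsto tendsto_const_nhds ?_
    (prob_mem.mono fun n => erProb_le_one)
  filter_upwards [prob_mem, hα, hk, Filter.eventually_ge_atTop ⌈4 / ε + 1⌉₊,
    Filter.eventually_gt_atTop 0] with n hp hαn hkn hn hn0
  have hα0 : 0 < α n := hαn.1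
  refine one_sub_exp_le_erProb_hasOnlySmallCuts hε ?_ hp ?_
  · rw [← div_le_iff₀' hε0]
    linarith [Nat.ceil_le.1 hn]
  · rw [div_le_iff₀ (by positivity)] at hkn
    calc (128 : ℝ) ≤ k n * (α n * ε ^ 2) / 2 := by linarith
      _ = k n * (α n / (2 * n)) * n * ε ^ 2 := by field_simp

open Classical in
/-- for every constant `ε ∈ (0,1)` there is `C > 0` such that for any choice
`α = α(n) ∈ (n^{-1/10}, 1)`, with `k = ⌈C/(αε²)⌉`, if `E' = E'_1 ∪ ... ∪ E'_k` is the
multiset union of `k` independent random edge sets on `[n]`, each including each potential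
edge independently with probability `α/(2n)`, and `m` is the total number of edges counted
with multiplicity, then with probability `1 - o(1)` as `n → ∞` every bipartition
`(S, [n] ∖ S)` is crossed by at most `(1+ε)·m/2` edges of `E'` (with multiplicity). -/
theorem stmt3 :
    ∀ ε : ℝ, 0 < ε → ε < 1 →
    ∃ C : ℝ, 0 < C ∧
      ∀ α : ℕ → ℝ,
        (∀ n : ℕ, 2 ≤ n → (n : ℝ) ^ (-(1 : ℝ) / 10) < α n ∧ α n < 1) →
        Filter.Tendsto
          (fun n : ℕ =>
            ∑ f ∈ Fintype.piFinset
                (fun _ : Fin ⌈C / (α n * ε ^ 2)⌉₊ => (potentialEdges n).powerset),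
              if ∀ S : Finset (Fin n),
                    ((∑ i, ((f i).filter (crosses S)).card : ℕ) : ℝ) ≤
                      (1 + ε) * ((∑ i, (f i).card : ℕ) : ℝ) / 2
                then ∏ i, erWeight n (α n / (2 * n)) (f i) else 0)
          Filter.atTop (nhds 1) := by
  refine fun ε hε0 hε1 => ⟨256, by norm_num, fun α hα => stmt3_general ⟨hε0, hε1.le⟩
    ((Filter.eventually_ge_atTop 2).mono fun n hn => ⟨?_, ?_⟩) (.of_forall fun _ => Nat.le_ceil _)⟩
  · exact (Real.rpow_nonneg n.cast_nonneg _).trans_lt (hα n hn).1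
  · linarith [(hα n hn).2, (Nat.ofNat_le_cast.2 hn : (2 : ℝ) ≤ n)]
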